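/- arXiv:1106.0196 — 11 statements merged into one kernel-verified Lean document; each statement's English description precedes it below -/
import Mathlib

section
/- Let S be a subset of Baire space ℕ^ℕ. Then S is guessable if and only if S is both Fσ (a countable union of closed sets) and Gδ (a countable intersection of open sets); that is, the guessable sets are exactly the Δ⁰₂ sets. (This is the m = 0 case of the paper's main theorem.) -/
/-- `G` guesses `S`: for every `f`, the guess `G (f 0, …, f n)` is eventually `1`
if `f ∈ S` and eventually `0` if `f ∉ S`. -/
def Guesses (G : List ℕ → ℕ) (S : Set (ℕ → ℕ)) : Prop :=
  ∀ f : ℕ → ℕ,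
    (f ∈ S → ∀ᶠ n in Filter.atTop, G (List.ofFn fun i : Fin (n + 1) => f i) = 1) ∧
    (f ∉ S → ∀ᶠ n in Filter.atTop, G (List.ofFn fun i : Fin (n + 1) => f i) = 0)

/-- `S` is guessable if some `G` guesses it. -/
def Guessable (S : Set (ℕ → ℕ)) : Prop := ∃ G : List ℕ → ℕ, Guesses G S

theorem cyl_aux {A : Set (ℕ → ℕ)} (hA : IsClosed A) {f : ℕ → ℕ} (hf : f ∉ A) :
    ∀ᶠ n in Filter.atTop, ¬ ∃ g ∈ A,
      (List.ofFn fun i : Fin (n + 1) => f i) =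
        List.ofFn fun i : Fin (List.ofFn fun i : Fin (n + 1) => f i).length => g i := by
  have hn : Aᶜ ∈ nhds f := hA.isOpen_compl.mem_nhds hf
  rw [nhds_pi, Filter.mem_pi] at hn
  obtain ⟨I, hI, t, ht, hs⟩ := hn
  obtain ⟨N, hN⟩ := hI.bddAbove
  filter_upwards [Filter.eventually_ge_atTop N] with n hn
  rintro ⟨g, hg, he⟩
  refine hs ?_ hg
  intro i hi
  have hi' : i < n + 1 := by have := hN hi; omega
  have h2 := congrArg (fun l => l[i]?) he
  simp [hi', -List.ofFn_succ] at h2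
  rw [← h2]
  exact mem_of_mem_nhds (ht i)

theorem cont_aux (G : List ℕ → ℕ) (n : ℕ) :
    IsClopen {f : ℕ → ℕ | G (List.ofFn fun i : Fin (n + 1) => f i) = 1} := by
  have hc : Continuous fun f : ℕ → ℕ => (fun i : Fin (n + 1) => f i) := by fun_prop
  exact (isClopen_discrete {v : Fin (n + 1) → ℕ | G (List.ofFn v) = 1}).preimage hc

/-- The guessable subsets of Baire space are exactly the sets that are both Fσ and Gδ,
i.e. the Δ⁰₂ sets. -/
theorem guessable_iff_fsigma_and_gdelta (S : Set (ℕ → ℕ)) :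
    Guessable S ↔
      ((∃ F : ℕ → Set (ℕ → ℕ), (∀ n, IsClosed (F n)) ∧ S = ⋃ n, F n) ∧
       (∃ U : ℕ → Set (ℕ → ℕ), (∀ n, IsOpen (U n)) ∧ S = ⋂ n, U n)) := by
  constructor
  · rintro ⟨G, hG⟩
    have key : ∀ f, f ∈ S ↔ ∃ N, ∀ n, N ≤ n →
        G (List.ofFn fun i : Fin (n + 1) => f i) = 1 := by
      intro f
      rw [← Filter.eventually_atTop]
      refine ⟨(hG f).1, fun h => ?_⟩
      by_contra hf
      obtain ⟨n, h1, h2⟩ := (h.and ((hG f).2 hf)).exists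
      omega
    have key2 : ∀ f, f ∈ S ↔ ∀ N, ∃ n, N ≤ n ∧
        G (List.ofFn fun i : Fin (n + 1) => f i) = 1 := by
      intro f
      refine ⟨fun h N => ?_, fun h => ?_⟩
      · obtain ⟨M, hM⟩ := (key f).1 h
        exact ⟨max N M, le_max_left _ _, hM _ (le_max_right _ _)⟩
      · by_contra hf
        obtain ⟨N, hN⟩ := Filter.eventually_atTop.1 ((hG f).2 hf)
        obtain ⟨n, hn, h1⟩ := h N
        have := hN n hn
        omega
    refine ⟨⟨fun N => ⋂ n, ⋂ (_ : N ≤ n),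
        {f : ℕ → ℕ | G (List.ofFn fun i : Fin (n + 1) => f i) = 1}, fun N => ?_, ?_⟩,
      ⟨fun N => ⋃ n, ⋃ (_ : N ≤ n),
        {f : ℕ → ℕ | G (List.ofFn fun i : Fin (n + 1) => f i) = 1}, fun N => ?_, ?_⟩⟩
    · exact isClosed_iInter fun n => isClosed_iInter fun _ => (cont_aux G n).1
    · ext f
      rw [key f]
      simp only [Set.mem_iUnion, Set.mem_iInter, Set.mem_setOf_eq]
    · exact isOpen_iUnion fun n => isOpen_iUnion fun _ => (cont_aux G n).2
    · ext f
      rw [key2 f]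
      simp only [Set.mem_iUnion, Set.mem_iInter, Set.mem_setOf_eq, exists_prop]
  · rintro ⟨⟨F, hF, hSF⟩, ⟨U, hU, hSU⟩⟩
    classical
    let P : List ℕ → Set (ℕ → ℕ) → Prop := fun l A =>
      ∃ g ∈ A, l = List.ofFn fun i : Fin l.length => g i
    have hP : ∀ (f : ℕ → ℕ) (n : ℕ) (A : Set (ℕ → ℕ)), f ∈ A →
        P (List.ofFn fun i : Fin (n + 1) => f i) A := by
      intro f n A hf
      refine ⟨f, hf, ?_⟩
      apply List.ext_getElem <;> simp
    have hC : ∀ n, IsClosed (U n)ᶜ := fun n => (hU n).isClosed_compl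
    refine ⟨fun l => if ∃ n, P l (F n) ∧ ∀ i, i < n → ¬ P l (U i)ᶜ then 1 else 0, fun f => ⟨?_, ?_⟩⟩
    · intro hf
      have h1 : f ∈ ⋃ n, F n := hSF ▸ hf
      have h2 : f ∈ ⋂ n, U n := hSU ▸ hf
      obtain ⟨n, hn⟩ := Set.mem_iUnion.1 h1
      have h3 : ∀ᶠ k in Filter.atTop, ∀ i ∈ Set.Iio n,
          ¬ P (List.ofFn fun i : Fin (k + 1) => f i) (U i)ᶜ :=
        (Filter.eventually_all_finite (Set.finite_Iio n)).2 fun i _ =>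
          cyl_aux (hC i) (fun h => h (Set.mem_iInter.1 h2 i))
      filter_upwards [h3] with k hk
      exact if_pos ⟨n, hP f k _ hn, hk⟩
    · intro hf
      have h1 : f ∉ ⋃ n, F n := hSF ▸ hf
      have h2 : f ∉ ⋂ n, U n := hSU ▸ hf
      rw [Set.mem_iInter, not_forall] at h2
      obtain ⟨n, hn⟩ := h2
      have h3 : ∀ᶠ k in Filter.atTop, ∀ i ∈ Set.Iic n,
          ¬ P (List.ofFn fun i : Fin (k + 1) => f i) (F i) :=
        (Filter.eventually_all_finite (Set.finite_Iic n)).2 fun i _ =>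
          cyl_aux (hF i) (fun h => h1 (Set.mem_iUnion.2 ⟨i, h⟩))
      filter_upwards [h3] with k hk
      refine if_neg ?_
      rintro ⟨m, hm, hm2⟩
      rcases le_or_gt m n with h | h
      · exact hk m h hm
      · exact hm2 n h (hP f k _ hn)
end

section
/- Let S be a subset of Baire space ℕ^ℕ. If S is guessable, then S is a countable union of countable intersections of clopen subsets of ℕ^ℕ, i.e., there is a family (Z_{i,j})_{i,j ∈ ℕ} of clopen sets with S = ⋃_{i∈ℕ} ⋂_{j∈ℕ} Z_{i,j}. -/
/-- If `S` is guessable then `S` is a countable union of countable intersections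
of clopen sets. -/
theorem guessable_union_inter_clopen (S : Set (ℕ → ℕ)) (hS : Guessable S) :
    ∃ Z : ℕ → ℕ → Set (ℕ → ℕ), (∀ i j, IsClopen (Z i j)) ∧
      S = ⋃ i, ⋂ j, Z i j := by
  obtain ⟨G, hG⟩ := hS
  refine ⟨fun i j => {f | G (List.ofFn fun k : Fin (i + j + 1) => f k) = 1}, ?_, ?_⟩
  · intro i j
    have hc : Continuous (fun (f : ℕ → ℕ) (k : Fin (i + j + 1)) => f k) := by fun_prop
    exact (isClopen_discrete {v : Fin (i + j + 1) → ℕ | G (List.ofFn v) = 1}).preimage hc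
  · ext f
    simp only [Set.mem_iUnion, Set.mem_iInter, Set.mem_setOf_eq]
    constructor
    · intro hf
      obtain ⟨i, hi⟩ := Filter.eventually_atTop.1 ((hG f).1 hf)
      exact ⟨i, fun j => hi (i + j) (Nat.le_add_right i j)⟩
    · rintro ⟨i, hi⟩
      by_contra hf
      obtain ⟨m, hm⟩ := Filter.eventually_atTop.1 ((hG f).2 hf)
      have h1 := hi m
      have h0 := hm (i + m) (Nat.le_add_left m i)
      rw [h0] at h1
      exact absurd h1 (by norm_num)
end

section
/- Let S be a subset of Baire space ℕ^ℕ. If S is guessable, then S is a countable intersection of countable unions of clopen subsets of ℕ^ℕ, i.e., there is a family (Z_{i,j})_{i,j ∈ ℕ} of clopen sets with S = ⋂_{i∈ℕ} ⋃_{j∈ℕ} Z_{i,j}. -/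
/-- If `S` is guessable then `S` is a countable intersection of countable unions
of clopen sets. -/
theorem guessable_inter_union_clopen (S : Set (ℕ → ℕ)) (hS : Guessable S) :
    ∃ Z : ℕ → ℕ → Set (ℕ → ℕ), (∀ i j, IsClopen (Z i j)) ∧
      S = ⋂ i, ⋃ j, Z i j := by
  obtain ⟨G, hG⟩ := hS
  refine ⟨fun i j => {f | G (List.ofFn fun k : Fin (i + j + 1) => f k) = 1}, ?_, ?_⟩
  · intro i j
    have hc : Continuous fun f : ℕ → ℕ => (fun k : Fin (i + j + 1) => f k) := by fun_prop
    exact (isClopen_discrete {v : Fin (i + j + 1) → ℕ | G (List.ofFn v) = 1}).preimage hc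
  · ext f
    simp only [Set.mem_iInter, Set.mem_iUnion, Set.mem_setOf_eq]
    constructor
    · intro hf i
      obtain ⟨N, hN⟩ := Filter.eventually_atTop.1 ((hG f).1 hf)
      exact ⟨N, hN (i + N) (by omega)⟩
    · intro h
      by_contra hf
      obtain ⟨N, hN⟩ := Filter.eventually_atTop.1 ((hG f).2 hf)
      obtain ⟨j, hj⟩ := h N
      have h0 := hN (N + j) (by omega)
      rw [hj] at h0
      exact one_ne_zero h0
end

section
/- Let S be a subset of Baire space ℕ^ℕ. Suppose there are families (σ_{i,j})_{i,j∈ℕ} and (τ_{i,j})_{i,j∈ℕ} of finite sequences of natural numbers such that S = ⋃_{i∈ℕ} ⋂_{j∈ℕ} [σ_{i,j}]ᶜ and S = ⋂_{i∈ℕ} ⋃_{j∈ℕ} [τ_{i,j}], where [σ] denotes the cylinder of all infinite extensions of the finite sequence σ. Then S is guessable. -/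
/-- The cylinder of a finite sequence `l`: all `f : ℕ → ℕ` extending `l`. -/
def cylinder (l : List ℕ) : Set (ℕ → ℕ) :=
  {f | ∀ i, (h : i < l.length) → f i = l.get ⟨i, h⟩}

theorem mem_cyl_of_prefix (f : ℕ → ℕ) (l : List ℕ) (n : ℕ)
    (h : l <+: List.ofFn fun i : Fin (n + 1) => f i) : f ∈ cylinder l := by
  intro i hi
  have := List.IsPrefix.getElem h hi
  rw [List.getElem_ofFn] at this
  exact this.symm

theorem prefix_of_mem_cyl (f : ℕ → ℕ) (l : List ℕ) (n : ℕ) (hn : l.length ≤ n)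
    (h : f ∈ cylinder l) : l <+: List.ofFn fun i : Fin (n + 1) => f i := by
  rw [List.prefix_iff_getElem]
  refine ⟨by simp; omega, ?_⟩
  intro i hi
  have := h i hi
  rw [List.getElem_ofFn]
  exact this.symm

theorem eventually_dead (f : ℕ → ℕ) (σ : ℕ → ℕ → List ℕ) (h : ∀ i, ∃ j, f ∈ cylinder (σ i j))
    (m : ℕ) : ∀ᶠ n in Filter.atTop, ∀ i ≤ m, ∃ j,
      σ i j <+: List.ofFn fun i : Fin (n + 1) => f i := by
  have := (Filter.eventually_all_finite (Set.finite_Iic m) (l := Filter.atTop)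
    (p := fun i n => ∃ j, σ i j <+: List.ofFn fun i : Fin (n + 1) => f i)).2 ?_
  · exact this
  · intro i _
    obtain ⟨j, hj⟩ := h i
    filter_upwards [Filter.eventually_ge_atTop (σ i j).length] with n hn
    exact ⟨j, prefix_of_mem_cyl f _ n hn hj⟩

/-- If `S` is a countable union of countable intersections of complements of cylinders,
and a countable intersection of countable unions of cylinders, then `S` is guessable. -/
theorem guessable_of_cylinder_forms (S : Set (ℕ → ℕ))
    (σ τ : ℕ → ℕ → List ℕ)
    (h₁ : S = ⋃ i, ⋂ j, (cylinder (σ i j))ᶜ)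
    (h₂ : S = ⋂ i, ⋃ j, cylinder (τ i j)) :
    Guessable S := by
  classical
  refine ⟨fun l => if ∃ i, (∀ j, ¬ σ i j <+: l) ∧ ∀ k ≤ i, ∃ j, τ k j <+: l then 1 else 0, ?_⟩
  intro f
  constructor
  · intro hf
    have a := hf
    have b := hf
    rw [h₁] at a
    rw [h₂] at b
    simp only [Set.mem_iUnion, Set.mem_iInter, Set.mem_compl_iff] at a b
    obtain ⟨i, hi⟩ := a
    filter_upwards [eventually_dead f τ b i] with n hn
    exact if_pos ⟨i, fun j hj => hi j (mem_cyl_of_prefix f _ n hj), hn⟩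
  · intro hf
    have a := hf
    have b := hf
    rw [h₁] at a
    rw [h₂] at b
    simp only [Set.mem_iUnion, Set.mem_iInter, Set.mem_compl_iff, not_exists, not_forall,
      not_not] at a b
    obtain ⟨k, hk⟩ := b
    filter_upwards [eventually_dead f σ a k] with n hn
    refine if_neg ?_
    rintro ⟨i, hi, hi'⟩
    rcases le_total i k with h | h
    · obtain ⟨j, hj⟩ := hn i h
      exact hi j hj
    · obtain ⟨j, hj⟩ := hi' k h
      exact hk j (mem_cyl_of_prefix f _ n hj)
end

section
/- Let S be a subset of Baire space ℕ^ℕ. Suppose there are families (D_{i,j})_{i,j∈ℕ} and (E_{i,j})_{i,j∈ℕ} of clopen subsets of ℕ^ℕ such that S = ⋃_{i∈ℕ} ⋂_{j∈ℕ} D_{i,j} and S = ⋂_{i∈ℕ} ⋃_{j∈ℕ} E_{i,j}. Then S is clopen-guessable. (This is the m = 1 case of Proposition 10, with Δ⁰₁ sets rendered as clopen sets.) -/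
/-- `S` is clopen-guessable: there are a sequence of clopen sets `C n` and a guesser `G`,
fed the characteristic values `χ_{C 0} f, …, χ_{C n} f`, whose guesses are eventually `1`
when `f ∈ S` and eventually `0` when `f ∉ S`. -/
def ClopenGuessable (S : Set (ℕ → ℕ)) : Prop :=
  ∃ C : ℕ → Set (ℕ → ℕ), (∀ n, IsClopen (C n)) ∧
    ∃ G : List ℕ → ℕ, ∀ f : ℕ → ℕ,
      (f ∈ S → ∀ᶠ n in Filter.atTop,
        G (List.ofFn fun i : Fin (n + 1) => (C i).indicator (fun _ => 1) f) = 1) ∧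
      (f ∉ S → ∀ᶠ n in Filter.atTop,
        G (List.ofFn fun i : Fin (n + 1) => (C i).indicator (fun _ => 1) f) = 0)

/-- If `S` is a countable union of countable intersections of clopen sets, and also a
countable intersection of countable unions of clopen sets, then `S` is clopen-guessable. -/
theorem clopenGuessable_of_forms (S : Set (ℕ → ℕ))
    (D E : ℕ → ℕ → Set (ℕ → ℕ))
    (hD : ∀ i j, IsClopen (D i j)) (hE : ∀ i j, IsClopen (E i j))
    (h₁ : S = ⋃ i, ⋂ j, D i j) (h₂ : S = ⋂ i, ⋃ j, E i j) :
    ClopenGuessable S := by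
  classical
  let C : ℕ → Set (ℕ → ℕ) := fun n => ⋃ i ∈ Finset.range (n + 1),
    ((⋂ j ∈ Finset.range (n + 1), D i j) ∩
      (⋂ k ∈ Finset.range i, ⋃ j ∈ Finset.range (n + 1), E k j))
  have hmem : ∀ n f, f ∈ C n ↔ ∃ i, i < n + 1 ∧ (∀ j, j < n + 1 → f ∈ D i j) ∧
      ∀ k, k < i → ∃ j, j < n + 1 ∧ f ∈ E k j := by
    intro n f
    simp only [C, Set.mem_iUnion, Set.mem_inter_iff, Set.mem_iInter, Finset.mem_range,
      exists_prop]
  have hG : ∀ n f, (List.ofFn fun i : Fin (n + 1) =>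
      (C i).indicator (fun _ => 1) f).getLastD 0 = (C n).indicator (fun _ => 1) f := by
    intro n f
    rw [List.ofFn_succ', List.concat_eq_append, List.getLastD_concat]
    simp
  refine ⟨C, ?_, fun l => l.getLastD 0, ?_⟩
  · intro n
    refine isClopen_biUnion_finset fun i _ => IsClopen.inter ?_ ?_
    · exact isClopen_biInter_finset fun j _ => hD i j
    · exact isClopen_biInter_finset fun k _ => isClopen_biUnion_finset fun j _ => hE k j
  · intro f
    simp only [hG]
    constructor
    · intro hf
      have hf1 := hf
      have hf2 := hf
      rw [h₁] at hf1
      rw [h₂] at hf2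
      simp only [Set.mem_iUnion, Set.mem_iInter] at hf1 hf2
      obtain ⟨i, hi⟩ := hf1
      choose w hw using hf2
      filter_upwards [Filter.eventually_ge_atTop (i + ∑ k ∈ Finset.range i, w k)] with n hn
      have : f ∈ C n := by
        rw [hmem]
        refine ⟨i, by omega, fun j _ => hi j, fun k hk => ⟨w k, ?_, hw k⟩⟩
        have := Finset.single_le_sum (f := w) (fun _ _ => Nat.zero_le _)
          (Finset.mem_range.2 hk)
        omega
      simp [this]
    · intro hf
      have hf1 := hf
      have hf2 := hf
      rw [h₁] at hf1
      rw [h₂] at hf2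
      simp only [Set.mem_iUnion, Set.mem_iInter, not_exists, not_forall] at hf1 hf2
      obtain ⟨k, hk⟩ := hf2
      choose w hw using hf1
      filter_upwards [Filter.eventually_ge_atTop (∑ i ∈ Finset.range (k + 1), w i)] with n hn
      have : f ∉ C n := by
        rw [hmem]
        rintro ⟨i, _, h2, h3⟩
        have hik : i < k + 1 := by
          by_contra hc
          obtain ⟨j, _, hj⟩ := h3 k (by omega)
          exact hk j hj
        have := Finset.single_le_sum (f := w) (fun _ _ => Nat.zero_le _)
          (Finset.mem_range.2 hik)
        exact hw i (h2 (w i) (by omega))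
      simp [this]
end

section
/- Let S be a subset of Baire space ℕ^ℕ. If S is clopen-guessable, then there are families (X_{i,j})_{i,j∈ℕ} and (Y_{i,j})_{i,j∈ℕ} of clopen subsets of ℕ^ℕ such that S = ⋃_{i∈ℕ} ⋂_{j∈ℕ} X_{i,j} and S = ⋂_{i∈ℕ} ⋃_{j∈ℕ} Y_{i,j}. (This is the m = 1 case of Proposition 11, with Δ⁰₁ sets rendered as clopen sets.) -/
/-- If `S` is clopen-guessable, then `S` is a countable union of countable intersections
of clopen sets, and also a countable intersection of countable unions of clopen sets. -/
theorem forms_of_clopenGuessable (S : Set (ℕ → ℕ)) (hS : ClopenGuessable S) :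
    ∃ X Y : ℕ → ℕ → Set (ℕ → ℕ),
      (∀ i j, IsClopen (X i j)) ∧ (∀ i j, IsClopen (Y i j)) ∧
      S = ⋃ i, ⋂ j, X i j ∧ S = ⋂ i, ⋃ j, Y i j := by
  obtain ⟨C, hC, G, hG⟩ := hS
  let A : ℕ → Set (ℕ → ℕ) := fun n =>
    {f | G (List.ofFn fun i : Fin (n + 1) => (C i).indicator (fun _ => 1) f) = 1}
  have hA : ∀ n, IsClopen (A n) := by
    intro n
    have h1 : Continuous (fun (f : ℕ → ℕ) (i : Fin (n + 1)) =>
        (C i).indicator (fun _ => (1 : ℕ)) f) :=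
      continuous_pi fun i => (hC i).continuous_indicator continuous_const
    exact (isClopen_discrete {v : Fin (n + 1) → ℕ | G (List.ofFn v) = 1}).preimage h1
  refine ⟨fun i j => A (i + j), fun i j => A (i + j), fun i j => hA _, fun i j => hA _, ?_, ?_⟩
  · ext f
    simp only [Set.mem_iUnion, Set.mem_iInter]
    constructor
    · intro hf
      obtain ⟨N, hN⟩ := Filter.eventually_atTop.1 ((hG f).1 hf)
      exact ⟨N, fun j => hN _ (Nat.le_add_right _ _)⟩
    · rintro ⟨N, hN⟩
      by_contra hf
      obtain ⟨M, hM⟩ := Filter.eventually_atTop.1 ((hG f).2 hf)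
      exact absurd ((hN M).symm.trans (hM _ (Nat.le_add_left _ _))) one_ne_zero
  · ext f
    simp only [Set.mem_iUnion, Set.mem_iInter]
    constructor
    · intro hf i
      obtain ⟨N, hN⟩ := Filter.eventually_atTop.1 ((hG f).1 hf)
      exact ⟨N, hN _ (Nat.le_add_left _ _)⟩
    · intro h
      by_contra hf
      obtain ⟨M, hM⟩ := Filter.eventually_atTop.1 ((hG f).2 hf)
      obtain ⟨j, hj⟩ := h M
      exact absurd (hj.symm.trans (hM _ (Nat.le_add_right _ _))) one_ne_zero
end

section
/- Let S be a subset of Baire space ℕ^ℕ. Then S is clopen-guessable if and only if S is both Fσ (a countable union of closed sets) and Gδ (a countable intersection of open sets). (This is the m = 1 case of the paper's main theorem: the first-order guessable sets are exactly the Δ⁰₂ sets.) -/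
open Filter in
theorem cg_fsigma (S : Set (ℕ → ℕ)) (g : ℕ → (ℕ → ℕ) → ℕ) (hg : ∀ n, Continuous (g n)) (a b : ℕ)
    (hab : a ≠ b)
    (h1 : ∀ f ∈ S, ∀ᶠ n in atTop, g n f = a) (h0 : ∀ f ∉ S, ∀ᶠ n in atTop, g n f = b) :
    ∃ F : ℕ → Set (ℕ → ℕ), (∀ n, IsClosed (F n)) ∧ S = ⋃ n, F n := by
  refine ⟨fun N => {f | ∀ n, N ≤ n → g n f = a}, fun N => ?_, ?_⟩
  · simp only [Set.ofPred_forall]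
    exact isClosed_iInter fun n => isClosed_iInter fun _ => isClosed_eq (hg n) continuous_const
  · ext f
    simp only [Set.mem_iUnion, Set.mem_ofPred_eq]
    constructor
    · intro hf
      exact eventually_atTop.1 (h1 f hf)
    · rintro hN
      by_contra hf
      obtain ⟨n, h, h'⟩ := ((eventually_atTop.2 hN).and (h0 f hf)).exists
      exact hab (h.symm.trans h')

theorem cg_clopen_union (U : Set (ℕ → ℕ)) (hU : IsOpen U) :
    ∃ D : ℕ → Set (ℕ → ℕ), (∀ n, IsClopen (D n)) ∧ U = ⋃ n, D n := by
  let A : (n : ℕ) → Set (Fin n → ℕ) := fun n => {v | ∀ g : ℕ → ℕ, (∀ i : Fin n, g i = v i) → g ∈ U}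
  refine ⟨fun n => (fun (f : ℕ → ℕ) (i : Fin n) => f i) ⁻¹' A n, fun n => ?_, ?_⟩
  · exact (isClopen_discrete (A n)).preimage (continuous_pi fun i => continuous_apply _)
  · ext f
    rw [Set.mem_iUnion]
    constructor
    · intro hf
      obtain ⟨_, ⟨x, n, rfl⟩, hfx, hsub⟩ :=
        (PiNat.isTopologicalBasis_cylinders (fun _ : ℕ => ℕ)).exists_subset_of_mem_open hf hU
      refine ⟨n, fun g hg => hsub fun i hi => ?_⟩
      exact (hg ⟨i, hi⟩).trans (hfx i hi)
    · rintro ⟨n, hn⟩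
      exact hn f fun _ => rfl

theorem cg_getD (C : ℕ → Set (ℕ → ℕ)) (f : ℕ → ℕ) (n m : ℕ) :
    (List.ofFn fun i : Fin (n + 1) => (C i).indicator (fun _ => 1) f).getD m 0 = 0 ↔
      (m ≤ n → f ∉ C m) := by
  by_cases h : m < n + 1
  · simp [List.getD, h, Nat.lt_succ_iff.1 h, -List.ofFn_succ]
  · have : ¬ m ≤ n := by omega
    simp [List.getD, h, this, -List.ofFn_succ]

/-- The clopen-guessable subsets of Baire space are exactly the sets that are both
Fσ and Gδ, i.e. the Δ⁰₂ sets. -/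
theorem clopenGuessable_iff_fsigma_and_gdelta (S : Set (ℕ → ℕ)) :
    ClopenGuessable S ↔
      ((∃ F : ℕ → Set (ℕ → ℕ), (∀ n, IsClosed (F n)) ∧ S = ⋃ n, F n) ∧
       (∃ U : ℕ → Set (ℕ → ℕ), (∀ n, IsOpen (U n)) ∧ S = ⋂ n, U n)) := by
  constructor
  · rintro ⟨C, hC, G, h⟩
    have hg : ∀ n, Continuous fun f : ℕ → ℕ =>
        G (List.ofFn fun i : Fin (n + 1) => (C i).indicator (fun _ => 1) f) := by
      intro n
      have h1 : Continuous fun f : ℕ → ℕ =>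
          (fun i : Fin (n + 1) => (C i).indicator (fun _ => 1) f : Fin (n + 1) → ℕ) :=
        continuous_pi fun i => (continuous_const (y := 1)).indicator (by
          simp [(isClopen_iff_frontier_eq_empty.1 (hC i))])
      exact (continuous_of_discreteTopology (f := fun v : Fin (n + 1) → ℕ => G (List.ofFn v))).comp h1
    refine ⟨cg_fsigma S _ hg 1 0 (by decide) (fun f => (h f).1) (fun f => (h f).2), ?_⟩
    obtain ⟨F, hF, hS⟩ := cg_fsigma Sᶜ _ hg 0 1 (by decide) (fun f => (h f).2)
      (fun f hf => (h f).1 (by simpa using hf))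
    exact ⟨fun n => (F n)ᶜ, fun n => (hF n).isOpen_compl, by rw [← compl_compl S, hS, Set.compl_iUnion]⟩
  · rintro ⟨⟨F, hF, hS⟩, U, hU, hS'⟩
    let K : ℕ → Set (ℕ → ℕ) := fun k => if Even k then F (k / 2) else (U (k / 2))ᶜ
    have hK : ∀ k, IsOpen (K k)ᶜ := by
      intro k
      by_cases hk : Even k
      · simpa [K, hk] using hF _
      · simpa [K, hk] using hU _
    choose D hD hKD using fun k => cg_clopen_union _ (hK k)
    have hKS : ∀ k f, f ∈ K k → (f ∈ S ↔ Even k) := by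
      intro k f hf
      by_cases hk : Even k
      · simp only [K, hk, if_true] at hf
        simp only [hk, iff_true]
        rw [hS]
        exact Set.mem_iUnion.2 ⟨_, hf⟩
      · simp only [K, hk, if_false] at hf
        simp only [hk, iff_false]
        rw [hS']
        exact fun h => hf (Set.mem_iInter.1 h _)
    have hcov : ∀ f, ∃ k, f ∈ K k := by
      intro f
      by_cases hf : f ∈ S
      · rw [hS] at hf
        obtain ⟨k, hk⟩ := Set.mem_iUnion.1 hf
        exact ⟨2 * k, by simpa [K] using hk⟩
      · rw [hS', Set.mem_iInter, not_forall] at hf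
        obtain ⟨k, hk⟩ := hf
        refine ⟨2 * k + 1, ?_⟩
        have h2 : (2 * k + 1) / 2 = k := by omega
        simpa [K, h2] using hk
    classical
    let C : ℕ → Set (ℕ → ℕ) := fun m => D m.unpair.1 m.unpair.2
    have key : ∀ f, ∃ k, f ∈ K k ∧ ∀ᶠ n in Filter.atTop,
        sInf {k | ∀ j, (List.ofFn fun i : Fin (n + 1) =>
          (C i).indicator (fun _ => 1) f).getD (Nat.pair k j) 0 = 0} = k := by
      intro f
      have hmin := Nat.find_spec (hcov f)
      refine ⟨Nat.find (hcov f), hmin, ?_⟩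
      have hlt : ∀ k < Nat.find (hcov f), ∃ j, f ∈ D k j := by
        intro k hk
        have := Nat.find_min (hcov f) hk
        rw [← Set.mem_compl_iff, hKD k] at this
        exact Set.mem_iUnion.1 this
      have hev : ∀ᶠ n in Filter.atTop, ∀ k ∈ Finset.range (Nat.find (hcov f)),
          ∃ j, Nat.pair k j ≤ n ∧ f ∈ D k j := by
        rw [Filter.eventually_all_finset]
        intro k hk
        obtain ⟨j, hj⟩ := hlt k (Finset.mem_range.1 hk)
        filter_upwards [Filter.eventually_ge_atTop (Nat.pair k j)] with n hn
        exact ⟨j, hn, hj⟩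
      filter_upwards [hev] with n hn
      simp only [cg_getD]
      refine IsLeast.csInf_eq ⟨?_, ?_⟩
      · intro j _ hj
        have : f ∈ (K (Nat.find (hcov f)))ᶜ := by
          rw [hKD]
          exact Set.mem_iUnion.2 ⟨j, by simpa [C] using hj⟩
        exact this hmin
      · intro k hk
        by_contra hlt
        obtain ⟨j, hj, hj'⟩ := hn k (Finset.mem_range.2 (not_le.1 hlt))
        exact hk j hj (by simpa [C] using hj')
    refine ⟨C, fun n => hD _ _, fun L =>
      if Even (sInf {k | ∀ j, L.getD (Nat.pair k j) 0 = 0}) then 1 else 0, fun f => ?_⟩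
    obtain ⟨k, hk, he⟩ := key f
    constructor
    · intro hf
      filter_upwards [he] with n hn
      rw [hn, if_pos ((hKS k f hk).1 hf)]
    · intro hf
      filter_upwards [he] with n hn
      rw [hn, if_neg (fun h => hf ((hKS k f hk).2 h))]
end

section
/- Let S be a subset of Baire space ℕ^ℕ. Then S is Δ⁰₂-guessable if and only if S is both a countable union of Gδ sets and a countable intersection of Fσ sets. (This is the m = 2 case of the paper's main theorem: the second-order guessable sets are exactly the Δ⁰₃ sets, where Δ⁰₂ sets are the sets that are both Fσ and Gδ, and Δ⁰₃ sets are the sets that are both Σ⁰₃, i.e. countable unions of Gδ sets, and Π⁰₃, i.e. countable intersections of Fσ sets.) -/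
/-- `A` is both Fσ (a countable union of closed sets) and Gδ (a countable
intersection of open sets). -/
def IsFsigmaGdelta (A : Set (ℕ → ℕ)) : Prop :=
  (∃ F : ℕ → Set (ℕ → ℕ), (∀ n, IsClosed (F n)) ∧ A = ⋃ n, F n) ∧
  (∃ U : ℕ → Set (ℕ → ℕ), (∀ n, IsOpen (U n)) ∧ A = ⋂ n, U n)

/-- `S` is Δ⁰₂-guessable: there are a sequence of sets `C n`, each both Fσ and Gδ,
and a guesser `G`, fed the characteristic values `χ_{C 0} f, …, χ_{C n} f`, whose
guesses are eventually `1` when `f ∈ S` and eventually `0` when `f ∉ S`. -/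
def Delta2Guessable (S : Set (ℕ → ℕ)) : Prop :=
  ∃ C : ℕ → Set (ℕ → ℕ), (∀ n, IsFsigmaGdelta (C n)) ∧
    ∃ G : List ℕ → ℕ, ∀ f : ℕ → ℕ,
      (f ∈ S → ∀ᶠ n in Filter.atTop,
        G (List.ofFn fun i : Fin (n + 1) => (C i).indicator (fun _ => 1) f) = 1) ∧
      (f ∉ S → ∀ᶠ n in Filter.atTop,
        G (List.ofFn fun i : Fin (n + 1) => (C i).indicator (fun _ => 1) f) = 0)

def DD (A : Set (ℕ → ℕ)) : Prop := IsGδ A ∧ IsGδ Aᶜ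

theorem gd_nat {A : Set (ℕ → ℕ)} (h : IsGδ A) :
    ∃ U : ℕ → Set (ℕ → ℕ), (∀ n, IsOpen (U n)) ∧ A = ⋂ n, U n :=
  isGδ_iff_eq_iInter_nat.1 h

theorem fs_nat {A : Set (ℕ → ℕ)} (h : IsGδ Aᶜ) :
    ∃ U : ℕ → Set (ℕ → ℕ), (∀ n, IsClosed (U n)) ∧ A = ⋃ n, U n := by
  obtain ⟨U, hU, e⟩ := gd_nat h
  refine ⟨fun n => (U n)ᶜ, fun n => (hU n).isClosed_compl, ?_⟩
  rw [← compl_compl A, e, Set.compl_iInter]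

theorem DD_iff (A : Set (ℕ → ℕ)) : IsFsigmaGdelta A ↔ DD A := by
  constructor
  · rintro ⟨⟨F, hF, e⟩, ⟨U, hU, e'⟩⟩
    refine ⟨e' ▸ IsGδ.iInter_of_isOpen hU, ?_⟩
    rw [e, Set.compl_iUnion]
    exact IsGδ.iInter_of_isOpen fun n => (hF n).isOpen_compl
  · rintro ⟨h1, h2⟩
    exact ⟨fs_nat h2, gd_nat h1⟩

theorem DD.compl {A : Set (ℕ → ℕ)} (h : DD A) : DD Aᶜ := ⟨h.2, by simpa using h.1⟩

theorem DD.inter {A B : Set (ℕ → ℕ)} (h : DD A) (h' : DD B) : DD (A ∩ B) :=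
  ⟨h.1.inter h'.1, by rw [Set.compl_inter]; exact h.2.union h'.2⟩

theorem DD.union {A B : Set (ℕ → ℕ)} (h : DD A) (h' : DD B) : DD (A ∪ B) :=
  ⟨h.1.union h'.1, by rw [Set.compl_union]; exact h.2.inter h'.2⟩

theorem DD_open {A : Set (ℕ → ℕ)} (h : IsOpen A) : DD A := by
  let := TopologicalSpace.metrizableSpaceMetric (ℕ → ℕ)
  exact ⟨h.isGδ, h.isClosed_compl.isGδ⟩

theorem DD_pat (C : ℕ → Set (ℕ → ℕ)) (hC : ∀ n, DD (C n)) (n : ℕ) :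
    ∀ P : List ℕ → Prop,
      DD {f | P (List.ofFn fun i : Fin n => (C i).indicator (fun _ => 1) f)} := by
  induction n with
  | zero =>
    intro P
    apply DD_open
    simp
  | succ n ih =>
    intro P
    have := ((hC n).inter (ih fun L => P (L ++ [1]))).union
      ((hC n).compl.inter (ih fun L => P (L ++ [0])))
    convert this using 1
    ext f
    simp only [Set.mem_setOf_eq, Set.mem_union, Set.mem_inter_iff, Set.mem_compl_iff]
    rw [List.ofFn_succ_last]
    by_cases h : f ∈ C n <;> simp [h]

theorem delta2Guessable_iff_delta3 (S : Set (ℕ → ℕ)) :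
    Delta2Guessable S ↔
      ((∃ U : ℕ → ℕ → Set (ℕ → ℕ), (∀ i j, IsOpen (U i j)) ∧ S = ⋃ i, ⋂ j, U i j) ∧
       (∃ F : ℕ → ℕ → Set (ℕ → ℕ), (∀ i j, IsClosed (F i j)) ∧ S = ⋂ i, ⋃ j, F i j)) := by
  constructor
  · rintro ⟨C, hC, G, hG⟩
    obtain ⟨A, hA⟩ : ∃ A : ℕ → Set (ℕ → ℕ), A = fun n => {f | G (List.ofFn fun i : Fin (n + 1) =>
      (C i).indicator (fun _ => 1) f) = 1} := ⟨_, rfl⟩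
    have hD : ∀ n, DD (A n) := fun n => by
      rw [hA]
      exact DD_pat C (fun n => (DD_iff _).1 (hC n)) (n + 1) (fun L => G L = 1)
    have h1 : ∀ f, f ∈ S → ∃ N, ∀ n, f ∈ A (N + n) := by
      intro f hf
      obtain ⟨N, hN⟩ := Filter.eventually_atTop.1 ((hG f).1 hf)
      refine ⟨N, fun n => ?_⟩
      rw [hA]
      exact hN _ (by omega)
    have h0 : ∀ f, f ∉ S → ∃ N, ∀ n, f ∉ A (N + n) := by
      intro f hf
      obtain ⟨N, hN⟩ := Filter.eventually_atTop.1 ((hG f).2 hf)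
      refine ⟨N, fun n => ?_⟩
      rw [hA]
      intro h
      have h2 := hN (N + n) (by omega)
      have h3 := h2.symm.trans h
      exact absurd h3 (by norm_num)
    have e1 : S = ⋃ N, ⋂ n, A (N + n) := by
      ext f
      simp only [Set.mem_iUnion, Set.mem_iInter]
      refine ⟨h1 f, ?_⟩
      rintro ⟨N, hN⟩
      by_contra h
      obtain ⟨M, hM⟩ := h0 f h
      exact hM N (by rw [add_comm]; exact hN M)
    have e2 : S = ⋂ N, ⋃ n, A (N + n) := by
      ext f
      simp only [Set.mem_iUnion, Set.mem_iInter]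
      constructor
      · intro h N
        obtain ⟨M, hM⟩ := h1 f h
        exact ⟨M, by rw [add_comm]; exact hM N⟩
      · intro h
        by_contra h'
        obtain ⟨M, hM⟩ := h0 f h'
        obtain ⟨n, hn⟩ := h M
        exact hM n hn
    constructor
    · have : ∀ N, IsGδ (⋂ n, A (N + n)) := fun N => IsGδ.iInter fun n => (hD _).1
      choose U hU hU' using fun N => gd_nat (this N)
      refine ⟨U, hU, ?_⟩
      rw [e1]
      exact Set.iUnion_congr hU'
    · have : ∀ N, IsGδ (⋃ n, A (N + n))ᶜ := fun N => by
        rw [Set.compl_iUnion]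
        exact IsGδ.iInter fun n => (hD _).2
      choose U hU hU' using fun N => fs_nat (this N)
      refine ⟨U, hU, ?_⟩
      rw [e2]
      exact Set.iInter_congr hU'
  · rintro ⟨⟨U, hU, eU⟩, ⟨F, hF, eF⟩⟩
    classical
    let W : Bool → ℕ → ℕ → Set (ℕ → ℕ) := fun b i j => if b then U i j else (F i j)ᶜ
    have hW : ∀ b i j, IsOpen (W b i j) := by
      rintro (_ | _) i j
      · exact (hF i j).isOpen_compl
      · exact hU i j
    have hS : ∀ f, f ∈ S ↔ ∃ i, ∀ j, f ∈ W true i j := by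
      intro f; rw [eU]; simp [W]
    have hS' : ∀ f, f ∉ S ↔ ∃ i, ∀ j, f ∈ W false i j := by
      intro f; rw [eF]; simp [W]
    clear_value W
    obtain ⟨e⟩ : Nonempty (Bool × ℕ × ℕ ≃ ℕ) := nonempty_equiv_of_countable
    let C : ℕ → Set (ℕ → ℕ) := fun k => W (e.symm k).1 (e.symm k).2.1 (e.symm k).2.2
    let ok : Bool → ℕ → List ℕ → Prop := fun b i L => ∀ j, L[e (b, i, j)]? ≠ some 0
    let L : (ℕ → ℕ) → ℕ → List ℕ := fun f n =>
      List.ofFn fun i : Fin (n + 1) => (C i).indicator (fun _ => 1) f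
    have ok1 : ∀ b i f, (∀ j, f ∈ W b i j) → ∀ n, ok b i (L f n) := by
      intro b i f h n j
      simp only [L, List.getElem?_ofFn]
      split_ifs
      · simp [C, h j]
      · simp
    have ok0 : ∀ b i f, (¬ ∀ j, f ∈ W b i j) → ∀ᶠ n in Filter.atTop, ¬ ok b i (L f n) := by
      intro b i f h
      push Not at h
      obtain ⟨j, hj⟩ := h
      filter_upwards [Filter.eventually_ge_atTop (e (b, i, j))] with n hn hok
      apply hok j
      have : e (b, i, j) < n + 1 := by omega
      simp only [L, List.getElem?_ofFn, dif_pos this]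
      simp [C, hj]
    refine ⟨C, fun n => (DD_iff _).2 (DD_open (hW _ _ _)), fun l =>
      if ∃ i, ok true i l ∧ ∀ i' ≤ i, ¬ ok false i' l then 1 else 0, fun f => ⟨?_, ?_⟩⟩
    · intro hf
      obtain ⟨i, hi⟩ := (hS f).1 hf
      have hn : ∀ i', ¬ ∀ j, f ∈ W false i' j := fun i' h => (hS' f).2 ⟨i', h⟩ hf
      have := (Filter.eventually_all_finite (Set.finite_Iic i)).2
        (fun i' _ => ok0 false i' f (hn i'))
      filter_upwards [this] with n h
      exact if_pos ⟨i, ok1 true i f hi n, h⟩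
    · intro hf
      obtain ⟨i, hi⟩ := (hS' f).1 hf
      have hn : ∀ i', ¬ ∀ j, f ∈ W true i' j := fun i' h => hf ((hS f).2 ⟨i', h⟩)
      have := (Filter.eventually_all_finite (Set.finite_Iic i)).2
        (fun i' _ => ok0 true i' f (hn i'))
      filter_upwards [this] with n h
      refine if_neg ?_
      rintro ⟨k, hk, hk'⟩
      by_cases hki : k ≤ i
      · exact h k hki hk
      · exact hk' i (by omega) (ok1 false i f hi n)
end

section
/- Let S be a subset of Baire space ℕ^ℕ. Suppose there are families (D_{i,j})_{i,j∈ℕ} and (E_{i,j})_{i,j∈ℕ} of subsets of ℕ^ℕ, each of which is both Fσ and Gδ, such that S = ⋃_{i∈ℕ} ⋂_{j∈ℕ} D_{i,j} and S = ⋂_{i∈ℕ} ⋃_{j∈ℕ} E_{i,j}. Then S is Δ⁰₂-guessable. (This is the m = 2 case of Proposition 10, with Δ⁰₂ sets rendered as sets that are both Fσ and Gδ.) -/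
theorem getD_ofFn_aux (a : ℕ → ℕ) (n k d : ℕ) :
    (List.ofFn fun i : Fin n => a i).getD k d = if k < n then a k else d := by
  by_cases h : k < n <;> simp [List.getD_eq_getElem?_getD, h]

/-- Row `i` has not been refuted as a witness for membership. -/
def aliveD (L : List ℕ) (i : ℕ) : Prop := ∀ j, L.getD (2 * Nat.pair i j) 1 = 1

/-- Row `i` has not been refuted as a witness for non-membership. -/
def aliveE (L : List ℕ) (i : ℕ) : Prop := ∀ j, L.getD (2 * Nat.pair i j + 1) 0 = 0

open Classical in
/-- The guesser. -/
noncomputable def guesser (L : List ℕ) : ℕ :=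
  if ∃ i, aliveD L i ∧ ∀ k ≤ i, ¬ aliveE L k then 1 else 0

/-- The interleaved sequence of sets. -/
def interleave (D E : ℕ → ℕ → Set (ℕ → ℕ)) (n : ℕ) : Set (ℕ → ℕ) :=
  if n % 2 = 0 then D (n / 2).unpair.1 (n / 2).unpair.2
  else E (n / 2).unpair.1 (n / 2).unpair.2

theorem interleave_even (D E : ℕ → ℕ → Set (ℕ → ℕ)) (i j : ℕ) :
    interleave D E (2 * Nat.pair i j) = D i j := by
  simp [interleave]

theorem interleave_odd (D E : ℕ → ℕ → Set (ℕ → ℕ)) (i j : ℕ) :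
    interleave D E (2 * Nat.pair i j + 1) = E i j := by
  have h1 : (2 * Nat.pair i j + 1) % 2 = 1 := by omega
  have h2 : (2 * Nat.pair i j + 1) / 2 = Nat.pair i j := by omega
  simp [interleave, h1, h2]

/-- If `S` is a countable union of countable intersections of sets that are both Fσ and Gδ,
and also a countable intersection of countable unions of such sets, then `S` is
Δ⁰₂-guessable. -/
theorem delta2Guessable_of_forms (S : Set (ℕ → ℕ))
    (D E : ℕ → ℕ → Set (ℕ → ℕ))
    (hD : ∀ i j, IsFsigmaGdelta (D i j)) (hE : ∀ i j, IsFsigmaGdelta (E i j))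
    (h₁ : S = ⋃ i, ⋂ j, D i j) (h₂ : S = ⋂ i, ⋃ j, E i j) :
    Delta2Guessable S := by
  classical
  refine ⟨interleave D E, ?_, guesser, ?_⟩
  · intro n
    unfold interleave
    split_ifs
    · exact hD _ _
    · exact hE _ _
  intro f
  have key : ∀ n k d, (List.ofFn fun i : Fin (n + 1) =>
      (interleave D E i).indicator (fun _ => (1 : ℕ)) f).getD k d
      = if k < n + 1 then (interleave D E k).indicator (fun _ => (1 : ℕ)) f else d :=
    fun n k d => getD_ofFn_aux
      (fun k => (interleave D E k).indicator (fun _ => (1 : ℕ)) f) (n + 1) k d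
  have hp : ∀ n i, aliveD (List.ofFn fun i : Fin (n + 1) =>
      (interleave D E i).indicator (fun _ => (1 : ℕ)) f) i ↔
      ∀ j, 2 * Nat.pair i j < n + 1 → f ∈ D i j := by
    intro n i
    unfold aliveD
    refine forall_congr' fun j => ?_
    rw [key, interleave_even]
    by_cases h : 2 * Nat.pair i j < n + 1 <;> by_cases h' : f ∈ D i j <;> simp [h, h']
  have hq : ∀ n i, aliveE (List.ofFn fun i : Fin (n + 1) =>
      (interleave D E i).indicator (fun _ => (1 : ℕ)) f) i ↔
      ∀ j, 2 * Nat.pair i j + 1 < n + 1 → f ∉ E i j := by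
    intro n i
    unfold aliveE
    refine forall_congr' fun j => ?_
    rw [key, interleave_odd]
    by_cases h : 2 * Nat.pair i j + 1 < n + 1 <;> by_cases h' : f ∈ E i j <;> simp [h, h']
  unfold guesser
  simp only [hp, hq]
  constructor
  · intro hf
    have hf1 := hf
    rw [h₁] at hf1
    rw [h₂] at hf
    simp only [Set.mem_iUnion, Set.mem_iInter] at hf hf1
    obtain ⟨i0, hi0⟩ := hf1
    choose g hg using hf
    have : ∀ᶠ n in Filter.atTop, ∀ k ∈ Finset.range (i0 + 1), 2 * Nat.pair k (g k) + 1 < n + 1 := by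
      rw [Filter.eventually_all_finset]
      intro k _
      filter_upwards [Filter.eventually_gt_atTop (2 * Nat.pair k (g k) + 1)] with n hn
      omega
    filter_upwards [this] with n hn
    rw [if_pos]
    refine ⟨i0, fun j _ => hi0 j, fun k hk hc => ?_⟩
    exact hc (g k) (hn k (Finset.mem_range.2 (by omega))) (hg k)
  · intro hf
    have hf1 := hf
    rw [h₁] at hf1
    rw [h₂] at hf
    simp only [Set.mem_iUnion, Set.mem_iInter, not_forall, not_exists] at hf hf1
    obtain ⟨i0, hi0⟩ := hf
    choose g hg using hf1
    have : ∀ᶠ n in Filter.atTop, ∀ k ∈ Finset.range (i0 + 1), 2 * Nat.pair k (g k) < n + 1 := by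
      rw [Filter.eventually_all_finset]
      intro k _
      filter_upwards [Filter.eventually_gt_atTop (2 * Nat.pair k (g k))] with n hn
      omega
    filter_upwards [this] with n hn
    rw [if_neg]
    rintro ⟨i, hi, hi'⟩
    by_cases h : i ≤ i0
    · exact hg i (hi (g i) (hn i (Finset.mem_range.2 (by omega))))
    · exact hi' i0 (by omega) (fun j _ => hi0 j)
end

section
/- Let S be a subset of Baire space ℕ^ℕ. If S is Δ⁰₂-guessable, then there are families (X_{i,j})_{i,j∈ℕ} and (Y_{i,j})_{i,j∈ℕ} of subsets of ℕ^ℕ, each of which is both Fσ and Gδ, such that S = ⋃_{i∈ℕ} ⋂_{j∈ℕ} X_{i,j} and S = ⋂_{i∈ℕ} ⋃_{j∈ℕ} Y_{i,j}. (This is the m = 2 case of Proposition 11.) -/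
theorem isFG_iff (A : Set (ℕ → ℕ)) : IsFsigmaGdelta A ↔ IsGδ Aᶜ ∧ IsGδ A := by
  unfold IsFsigmaGdelta
  rw [isGδ_iff_eq_iInter_nat, isGδ_iff_eq_iInter_nat]
  refine and_congr ⟨?_, ?_⟩ Iff.rfl
  · rintro ⟨F, hF, rfl⟩
    exact ⟨fun n => (F n)ᶜ, fun n => (hF n).isOpen_compl, by simp⟩
  · rintro ⟨U, hU, h⟩
    refine ⟨fun n => (U n)ᶜ, fun n => (hU n).isClosed_compl, ?_⟩
    rw [← compl_compl A, h, Set.compl_iInter]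

theorem isFG_const (p : Prop) : IsFsigmaGdelta {_f : ℕ → ℕ | p} := by
  rw [isFG_iff]
  by_cases hp : p
  · simp [hp]
  · simp [hp]

theorem isFG_compl {A : Set (ℕ → ℕ)} (h : IsFsigmaGdelta A) : IsFsigmaGdelta Aᶜ := by
  rw [isFG_iff] at *
  rw [compl_compl]
  exact h.symm

theorem isFG_inter {A B : Set (ℕ → ℕ)} (h : IsFsigmaGdelta A) (h2 : IsFsigmaGdelta B) :
    IsFsigmaGdelta (A ∩ B) := by
  rw [isFG_iff] at *
  rw [Set.compl_inter]
  exact ⟨h.1.union h2.1, h.2.inter h2.2⟩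

theorem isFG_union {A B : Set (ℕ → ℕ)} (h : IsFsigmaGdelta A) (h2 : IsFsigmaGdelta B) :
    IsFsigmaGdelta (A ∪ B) := by
  rw [isFG_iff] at *
  rw [Set.compl_union]
  exact ⟨h.1.inter h2.1, h.2.union h2.2⟩

theorem isFG_guess (n : ℕ) : ∀ (C : ℕ → Set (ℕ → ℕ)) (_ : ∀ n, IsFsigmaGdelta (C n))
    (P : List ℕ → Prop), IsFsigmaGdelta {f : ℕ → ℕ |
      P (List.ofFn fun i : Fin n => (C i).indicator (fun _ => 1) f)} := by
  induction n with
  | zero => intro C hC P; simpa using isFG_const (P [])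
  | succ n ih =>
    intro C hC P
    have h1 := ih (fun k => C (k + 1)) (fun k => hC (k + 1)) (fun l => P (1 :: l))
    have h0 := ih (fun k => C (k + 1)) (fun k => hC (k + 1)) (fun l => P (0 :: l))
    convert isFG_union (isFG_inter (hC 0) h1) (isFG_inter (isFG_compl (hC 0)) h0) using 1
    ext f
    by_cases hf : f ∈ C 0
    · simp [List.ofFn_succ, hf]
    · simp [List.ofFn_succ, hf]

/-- If `S` is Δ⁰₂-guessable, then `S` is a countable union of countable intersections of
sets that are both Fσ and Gδ, and also a countable intersection of countable unions of
such sets. -/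
theorem forms_of_delta2Guessable (S : Set (ℕ → ℕ)) (hS : Delta2Guessable S) :
    ∃ X Y : ℕ → ℕ → Set (ℕ → ℕ),
      (∀ i j, IsFsigmaGdelta (X i j)) ∧ (∀ i j, IsFsigmaGdelta (Y i j)) ∧
      S = ⋃ i, ⋂ j, X i j ∧ S = ⋂ i, ⋃ j, Y i j := by
  obtain ⟨C, hC, G, hG⟩ := hS
  have key := fun (n : ℕ) (P : List ℕ → Prop) => isFG_guess (n + 1) C hC P
  refine ⟨fun i j => {f | i ≤ j →
      G (List.ofFn fun k : Fin (j + 1) => (C k).indicator (fun _ => 1) f) = 1},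
    fun i j => {f | i ≤ j ∧
      G (List.ofFn fun k : Fin (j + 1) => (C k).indicator (fun _ => 1) f) = 1},
    fun i j => key j (fun l => i ≤ j → G l = 1), fun i j => key j (fun l => i ≤ j ∧ G l = 1),
    ?_, ?_⟩
  · ext f
    simp only [Set.mem_iUnion, Set.mem_iInter, Set.mem_setOf_eq]
    constructor
    · intro hf
      exact Filter.eventually_atTop.1 ((hG f).1 hf)
    · intro h
      by_contra hf
      obtain ⟨n, h1, h0⟩ := ((Filter.eventually_atTop.2 h).and ((hG f).2 hf)).exists
      omega
  · ext f
    simp only [Set.mem_iUnion, Set.mem_iInter, Set.mem_setOf_eq]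
    constructor
    · intro hf i
      obtain ⟨n, h1, h0⟩ := ((Filter.eventually_ge_atTop i).and ((hG f).1 hf)).exists
      exact ⟨n, h1, h0⟩
    · intro h
      by_contra hf
      obtain ⟨N, hN⟩ := Filter.eventually_atTop.1 ((hG f).2 hf)
      obtain ⟨j, hj, h1⟩ := h N
      have := hN j hj
      omega
end

section
/- Let S be a subset of Baire space ℕ^ℕ. Suppose there are families (X_{i,j})_{i,j∈ℕ} and (Y_{i,j})_{i,j∈ℕ} of clopen subsets of ℕ^ℕ such that S = ⋃_{i∈ℕ} ⋂_{j∈ℕ} X_{i,j} and S = ⋂_{i∈ℕ} ⋃_{j∈ℕ} Y_{i,j}. Then there is a single family (Z_{i,j})_{i,j∈ℕ} of clopen subsets of ℕ^ℕ such that S = ⋃_{i∈ℕ} ⋂_{j∈ℕ} Z_{i,j} = ⋂_{i∈ℕ} ⋃_{j∈ℕ} Z_{i,j}. (This is the n = 1 case of the paper's final Corollary, with Δ⁰₁ sets rendered as clopen sets.) -/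
theorem ev_bdd_aux (P : ℕ → ℕ → Prop) (m : ℕ) (h : ∀ k < m, ∃ j, P k j) :
    ∃ N, ∀ k < m, ∃ j ≤ N, P k j := by
  induction m with
  | zero => exact ⟨0, fun k hk => absurd hk (Nat.not_lt_zero k)⟩
  | succ m ih =>
    obtain ⟨N, hN⟩ := ih (fun k hk => h k (by omega))
    obtain ⟨j, hj⟩ := h m (by omega)
    refine ⟨max N j, fun k hk => ?_⟩
    rcases Nat.lt_succ_iff_lt_or_eq.mp hk with hk | rfl
    · obtain ⟨l, hl, hp⟩ := hN k hk
      exact ⟨l, le_trans hl (le_max_left _ _), hp⟩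
    · exact ⟨j, le_max_right _ _, hj⟩

/-- If `S` is both a countable union of countable intersections of clopen sets and a
countable intersection of countable unions of clopen sets, then a single family of clopen
sets realizes both forms. -/
theorem single_clopen_family (S : Set (ℕ → ℕ))
    (X Y : ℕ → ℕ → Set (ℕ → ℕ))
    (hX : ∀ i j, IsClopen (X i j)) (hY : ∀ i j, IsClopen (Y i j))
    (h₁ : S = ⋃ i, ⋂ j, X i j) (h₂ : S = ⋂ i, ⋃ j, Y i j) :
    ∃ Z : ℕ → ℕ → Set (ℕ → ℕ), (∀ i j, IsClopen (Z i j)) ∧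
      S = ⋃ i, ⋂ j, Z i j ∧ S = ⋂ i, ⋃ j, Z i j := by
  let C : ℕ → Set (ℕ → ℕ) := fun n =>
    ⋃ i ∈ Set.Iic n, ((⋂ j ∈ Set.Iic n, X i j) ∩ ⋂ k ∈ Set.Iic i, ⋃ j ∈ Set.Iic n, Y k j)
  have hC : ∀ n, IsClopen (C n) := fun n =>
    (Set.finite_Iic n).isClopen_biUnion fun i _ =>
      ((Set.finite_Iic n).isClopen_biInter fun j _ => hX i j).inter
        ((Set.finite_Iic i).isClopen_biInter fun k _ =>
          (Set.finite_Iic n).isClopen_biUnion fun j _ => hY k j)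
  have hm : ∀ n x, x ∈ C n ↔ ∃ i ≤ n, (∀ j ≤ n, x ∈ X i j) ∧ ∀ k ≤ i, ∃ j ≤ n, x ∈ Y k j := by
    intro n x
    simp only [C, Set.mem_iUnion, Set.mem_iInter, Set.mem_inter_iff, Set.mem_Iic, exists_prop]
  have hin : ∀ x ∈ S, ∃ N, ∀ n ≥ N, x ∈ C n := by
    intro x hx
    have a := hx
    have b := hx
    rw [h₁] at a
    rw [h₂] at b
    simp only [Set.mem_iUnion, Set.mem_iInter] at a b
    obtain ⟨i, hi⟩ := a
    obtain ⟨N, hN⟩ := ev_bdd_aux (fun k j => x ∈ Y k j) (i+1) (fun k _ => b k)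
    refine ⟨max N i, fun n hn => (hm n x).2 ⟨i, by omega, fun j _ => hi j, fun k hk => ?_⟩⟩
    obtain ⟨j, hj, h⟩ := hN k (by omega)
    exact ⟨j, by omega, h⟩
  have hout : ∀ x, x ∉ S → ∃ N, ∀ n ≥ N, x ∉ C n := by
    intro x hx
    have a := hx
    have b := hx
    rw [h₁] at a
    rw [h₂] at b
    simp only [Set.mem_iUnion, Set.mem_iInter, not_exists, not_forall] at a b
    obtain ⟨k, hk⟩ := b
    obtain ⟨N, hN⟩ := ev_bdd_aux (fun i j => x ∉ X i j) k (fun i _ => a i)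
    refine ⟨N, fun n hn hc => ?_⟩
    obtain ⟨i, _, h1, h2⟩ := (hm n x).1 hc
    rcases lt_or_ge i k with h | h
    · obtain ⟨j, hj, h'⟩ := hN i h
      exact h' (h1 j (by omega))
    · obtain ⟨j, _, h'⟩ := h2 k h
      exact hk j h'
  refine ⟨fun i j => C (max i j), fun i j => hC _, ?_, ?_⟩
  · ext x
    simp only [Set.mem_iUnion, Set.mem_iInter]
    constructor
    · intro hx
      obtain ⟨N, hN⟩ := hin x hx
      exact ⟨N, fun j => hN _ (le_max_left _ _)⟩
    · rintro ⟨i, hi⟩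
      by_contra hx
      obtain ⟨N, hN⟩ := hout x hx
      exact hN _ (le_max_right _ _) (hi N)
  · ext x
    simp only [Set.mem_iUnion, Set.mem_iInter]
    constructor
    · intro hx i
      obtain ⟨N, hN⟩ := hin x hx
      exact ⟨N, hN _ (le_max_right _ _)⟩
    · intro h
      by_contra hx
      obtain ⟨N, hN⟩ := hout x hx
      obtain ⟨j, hj⟩ := h N
      exact hN _ (le_max_left _ _) hj
end
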